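/- Let θ be a cylindric diagram in C_ω, T ∈ LE(θ), and v ∈ W. Then v ∈ [e, w_{θ,T}) if and only if v = w_ξ for some proper order ideal ξ ∈ I(θ). -/

import Mathlib

/-!
The removal of cells from a cylindric diagram is tracked by the action of simple reflections on a
weight attached to the diagram, all of whose pairings with simple coroots lie in `{-1, 0, 1}`.

A cylindric diagram `F` is described by its profile `p : ℤ → ℤ`, where `p j` is the largest `a`
with `π(a, a + j) ∈ F`. Consecutive values of `p` differ by `0` or `-1`, and
`p (j + κ) = p j - m`. The function `j ↦ -p j - (m / κ) j` is therefore `κ`-periodic and gives a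
weight `lam p = Σ_i (-p i - (m / κ) i) α_i`, whose pairing with `α_j^∨` is
`(p (j-1) - p j) + (p (j+1) - p j) ∈ {-1, 0, 1}`. The value `-1` occurs exactly when `F` has a
minimal cell of content `j`, and then `s_j (lam p) = lam p + α_j` is the weight of `F` with that
cell removed. In all cases `s_j (lam p)` is again the weight of a profile.

Consequently, for a word `i₁ … i_n`, the height of `s_{i_n} ⋯ s_{i_1} (lam p)` exceeds that of
`lam p` by at most `n`, with equality precisely when the word is the content word of a sequence of
`n` cells which can be removed successively from `F` as minimal cells (`Peel F`). Hence such words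
are reduced, and every reduced word of such an element is again such a word (`peel_word_rigid`).
This handles a step downwards in the weak order: removing a last letter of some reduced word leaves
an element attached to an ideal.

For the converse, minimal cells of a diagram have commuting reflections, because cells whose
contents are equal or adjacent are comparable. So in any removal sequence a minimal cell can be
moved to the front (`peel_to_front`), and a removal sequence of an ideal extends to a sequence for
any larger finite ideal without changing the Weyl group element of the latter (`peel_extend`).
-/

namespace CylPaper

/-! ## The cylinder and its order -/

abbrev Z2 : Type := ℤ × ℤ

/-- The partial order on ℤ²: (a,b) ≤ (c,d) iff a ≥ c and b ≥ d. -/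
def le2 (x y : Z2) : Prop := y.1 ≤ x.1 ∧ y.2 ≤ x.2

/-- The period ω = (m, -ℓ). -/
def om (m l : ℕ) : Z2 := ((m : ℤ), -(l : ℤ))

/-- The cylinder C_ω = ℤ²/ℤω. -/
abbrev Cyl (m l : ℕ) : Type := Z2 ⧸ AddSubgroup.zmultiples (om m l)

/-- The natural projection π : ℤ² → C_ω. -/
def pr (m l : ℕ) : Z2 →+ Cyl m l := QuotientAddGroup.mk' _

/-- The induced order relation on the cylinder: x ≤ y iff there are lifts with x̃ ≤ ỹ. -/
def cle (m l : ℕ) (x y : Cyl m l) : Prop :=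
  ∃ a b : Z2, pr m l a = x ∧ pr m l b = y ∧ le2 a b

/-- A cylindric diagram: a non-trivial order filter of C_ω. -/
def IsCylindric (m l : ℕ) (θ : Set (Cyl m l)) : Prop :=
  θ.Nonempty ∧ θ ≠ Set.univ ∧ ∀ x ∈ θ, ∀ y, cle m l x y → y ∈ θ

/-- A periodic diagram of period ω: a non-trivial order filter of ℤ² with Θ + ω = Θ. -/
def IsPeriodic (m l : ℕ) (Θ : Set Z2) : Prop :=
  Θ.Nonempty ∧ Θ ≠ Set.univ ∧ (∀ x ∈ Θ, ∀ y, le2 x y → y ∈ Θ) ∧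
    (fun p => p + om m l) '' Θ = Θ

/-- A proper order ideal ξ of the sub-poset θ of C_ω. -/
def IsProperIdealOf (m l : ℕ) (θ ξ : Set (Cyl m l)) : Prop :=
  ξ ⊆ θ ∧ ξ ≠ θ ∧ ∀ x ∈ ξ, ∀ y ∈ θ, cle m l y x → y ∈ ξ

/-- A proper order ideal of the whole cylinder C_ω. -/
def IsProperIdealC (m l : ℕ) (J : Set (Cyl m l)) : Prop :=
  J ≠ Set.univ ∧ ∀ x ∈ J, ∀ y, cle m l y x → y ∈ J

/-- A proper order filter of the whole cylinder C_ω. -/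
def IsProperFilterC (m l : ℕ) (J : Set (Cyl m l)) : Prop :=
  J ≠ Set.univ ∧ ∀ x ∈ J, ∀ y, cle m l x y → y ∈ J

/-! ## The content map -/

/-- The content on ℤ²: (a,b) ↦ b - a mod κ (κ = m + ℓ). -/
def conHom (m l : ℕ) : Z2 →+ ZMod (m + l) where
  toFun p := ((p.2 - p.1 : ℤ) : ZMod (m + l))
  map_zero' := by simp
  map_add' a b := by
    simp only [Prod.fst_add, Prod.snd_add]
    push_cast
    ring

lemma conHom_om (m l : ℕ) : conHom m l (om m l) = 0 := by
  have h : ((m + l : ℕ) : ZMod (m + l)) = 0 := ZMod.natCast_self _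
  show ((((om m l).2 - (om m l).1 : ℤ)) : ZMod (m + l)) = 0
  simp only [om]
  push_cast at h ⊢
  linear_combination -h

/-- The content map con : C_ω → ℤ/κℤ. -/
def con (m l : ℕ) : Cyl m l →+ ZMod (m + l) :=
  QuotientAddGroup.lift _ (conHom m l) (by
    intro x hx
    obtain ⟨k, rfl⟩ := AddSubgroup.mem_zmultiples_iff.mp hx
    simp only [AddMonoidHom.mem_ker, map_zsmul, conHom_om, smul_zero])

/-! ## The affine root system of type A_{κ-1}^{(1)} -/

/-- h*, with coordinates in the basis {α_i (i ∈ ℤ/κℤ), Λ₀}: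
`(c, t)` stands for `Σ_i c_i α_i + t Λ₀`. -/
abbrev Hw (κ : ℕ) : Type := (ZMod κ → ℚ) × ℚ

/-- The affine Cartan matrix of type A_{κ-1}^{(1)} (valid for κ ≥ 2). -/
def cartan (κ : ℕ) (i j : ZMod κ) : ℚ :=
  (if i = j then 2 else 0) + (if i - j = 1 then -1 else 0) + (if i - j = -1 then -1 else 0)

/-- The simple root α_i. -/
def alphaR (κ : ℕ) (i : ZMod κ) : Hw κ := (Pi.single i 1, 0)

/-- The null root δ = Σ_i α_i. -/
def deltaR (κ : ℕ) : Hw κ := (fun _ => 1, 0)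

/-- The pairing ⟨ζ, α_i^∨⟩. -/
noncomputable def pairSimple (κ : ℕ) (ζ : Hw κ) (i : ZMod κ) : ℚ :=
  (∑ᶠ j, ζ.1 j * cartan κ i j) + ζ.2 * (if i = 0 then 1 else 0)

/-- The pairing ⟨ζ, β^∨⟩ where β = Σ_i k_i α_i lies in the root lattice,
so β^∨ = Σ_i k_i α_i^∨. -/
noncomputable def pairCo (κ : ℕ) (ζ β : Hw κ) : ℚ := ∑ᶠ i, β.1 i * pairSimple κ ζ i

/-- The simple reflection s_i : ζ ↦ ζ - ⟨ζ, α_i^∨⟩ α_i, as a map on h*. -/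
noncomputable def sFun (κ : ℕ) (i : ZMod κ) (ζ : Hw κ) : Hw κ :=
  ζ - pairSimple κ ζ i • alphaR κ i

/-- The element s_{i₁} s_{i₂} ⋯ s_{i_r} of the affine Weyl group
given by a word [i₁, i₂, …, i_r]. -/
noncomputable def wordProd (κ : ℕ) (L : List (ZMod κ)) : Hw κ → Hw κ :=
  (L.map (sFun κ)).foldr (· ∘ ·) id

/-- Membership in the affine Weyl group W (generated by the s_i). -/
def Wmem (κ : ℕ) (w : Hw κ → Hw κ) : Prop := ∃ L : List (ZMod κ), wordProd κ L = w

/-- The Coxeter length: the least r such that w is a product of r simple reflections. -/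
noncomputable def len (κ : ℕ) (w : Hw κ → Hw κ) : ℕ :=
  sInf {r : ℕ | ∃ L : List (ZMod κ), L.length = r ∧ wordProd κ L = w}

/-- Q₊ = Σ_i ℤ≥0 α_i. -/
def QPos (κ : ℕ) : Set (Hw κ) := {x | x.2 = 0 ∧ ∀ i, ∃ n : ℕ, x.1 i = (n : ℚ)}

/-- The set R = WΠ of real roots. -/
def Rset (κ : ℕ) : Set (Hw κ) :=
  {β | ∃ (L : List (ZMod κ)) (i : ZMod κ), β = wordProd κ L (alphaR κ i)}

/-- Positive real roots R₊ = R ∩ Q₊. -/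
def Rpos (κ : ℕ) : Set (Hw κ) := Rset κ ∩ QPos κ

/-- Negative real roots R₋ = -R₊. -/
def Rneg (κ : ℕ) : Set (Hw κ) := {β | -β ∈ Rpos κ}

/-- The inversion set R(w) = R₊ ∩ w R₋. -/
def invSet (κ : ℕ) (w : Hw κ → Hw κ) : Set (Hw κ) := Rpos κ ∩ (w '' Rneg κ)

/-- The weak right Bruhat order on W. -/
def wble (κ : ℕ) (v w : Hw κ → Hw κ) : Prop :=
  Relation.ReflTransGen
    (fun u u' => ∃ i : ZMod κ, u' = u ∘ sFun κ i ∧ len κ u' = len κ u + 1) v w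

/-- The weak Bruhat interval [e, w]. -/
def bint (κ : ℕ) (w : Hw κ → Hw κ) : Set (Hw κ → Hw κ) :=
  {x | wble κ id x ∧ wble κ x w}

/-- A single commutation move on words: swap adjacent letters i, j with i - j ≠ 0, ±1. -/
def CommMove (κ : ℕ) (L1 L2 : List (ZMod κ)) : Prop :=
  ∃ (u v : List (ZMod κ)) (i j : ZMod κ),
    i - j ≠ 0 ∧ i - j ≠ 1 ∧ i - j ≠ -1 ∧
    L1 = u ++ i :: j :: v ∧ L2 = u ++ j :: i :: v

/-- A word is reduced if its length equals the Coxeter length of its product. -/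
def IsReducedWord (κ : ℕ) (L : List (ZMod κ)) : Prop :=
  len κ (wordProd κ L) = L.length

/-- Fully commutative: any reduced word for w can be obtained from any other
using only commutation moves. -/
def FullyComm (κ : ℕ) (w : Hw κ → Hw κ) : Prop :=
  ∀ L1 L2 : List (ZMod κ),
    IsReducedWord κ L1 → wordProd κ L1 = w →
    IsReducedWord κ L2 → wordProd κ L2 = w →
    Relation.ReflTransGen (CommMove κ) L1 L2

/-! ## Hooks, bottom set and weights attached to a cylindric diagram -/

/-- α(x) = α_{con(x)}. -/
def alC (m l : ℕ) (x : Cyl m l) : Hw (m + l) := alphaR (m + l) (con m l x)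

/-- arm(x) = {x + π(0,k) : k ≥ 1} ∩ θ. -/
def armSet (m l : ℕ) (θ : Set (Cyl m l)) (x : Cyl m l) : Set (Cyl m l) :=
  {y | y ∈ θ ∧ ∃ k : ℕ, 1 ≤ k ∧ y = x + pr m l (0, (k : ℤ))}

/-- leg(x) = {x + π(k,0) : k ≥ 1} ∩ θ. -/
def legSet (m l : ℕ) (θ : Set (Cyl m l)) (x : Cyl m l) : Set (Cyl m l) :=
  {y | y ∈ θ ∧ ∃ k : ℕ, 1 ≤ k ∧ y = x + pr m l ((k : ℤ), 0)}

/-- The colored hook length hk(x) = α(x) + Σ_{y∈arm(x)} α(y) + Σ_{y∈leg(x)} α(y). -/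
noncomputable def hk (m l : ℕ) (θ : Set (Cyl m l)) (x : Cyl m l) : Hw (m + l) :=
  alC m l x + (∑ᶠ y ∈ armSet m l θ x, alC m l y) + (∑ᶠ y ∈ legSet m l θ x, alC m l y)

/-- x is the minimum cell b_i of content i in θ. -/
def IsBottomCell (m l : ℕ) (θ : Set (Cyl m l)) (i : ZMod (m + l)) (x : Cyl m l) : Prop :=
  x ∈ θ ∧ con m l x = i ∧ ∀ y ∈ θ, con m l y = i → cle m l x y

/-- The bottom set Γ = {b_i : i ∈ ℤ/κℤ}. -/
def btm (m l : ℕ) (θ : Set (Cyl m l)) : Set (Cyl m l) :=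
  {x | ∃ i, IsBottomCell m l θ i x}

/-- The maximal elements Γ_max of the bottom set. -/
def btmMax (m l : ℕ) (θ : Set (Cyl m l)) : Set (Cyl m l) :=
  {x | x ∈ btm m l θ ∧ ∀ y ∈ btm m l θ, cle m l x y → y = x}

/-- The minimal elements Γ_min of the bottom set. -/
def btmMin (m l : ℕ) (θ : Set (Cyl m l)) : Set (Cyl m l) :=
  {x | x ∈ btm m l θ ∧ ∀ y ∈ btm m l θ, cle m l y x → y = x}

open Classical in
/-- The coefficient a_i of Λ_i in the predominant weight P_θ:
1 if b_i ∈ Γ_max, -1 if b_i ∈ Γ_min, 0 otherwise. -/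
noncomputable def aC (m l : ℕ) (θ : Set (Cyl m l)) (i : ZMod (m + l)) : ℚ :=
  if ∃ x, IsBottomCell m l θ i x ∧ x ∈ btmMax m l θ then 1
  else if ∃ x, IsBottomCell m l θ i x ∧ x ∈ btmMin m l θ then -1 else 0

/-- The pairing ⟨P_θ, β^∨⟩ = Σ_i a_i k_i for β = Σ_i k_i α_i,
where P_θ = Σ_i a_i Λ_i (since ⟨Λ_i, α_j^∨⟩ = δ_{ij} and ⟨Λ_i, d⟩ = 0). -/
noncomputable def pairP (m l : ℕ) (θ : Set (Cyl m l)) (β : Hw (m + l)) : ℚ :=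
  ∑ᶠ i, aC m l θ i * β.1 i

/-- D(P_θ) = {α ∈ R₊ : ⟨P_θ, α^∨⟩ = -1}. -/
def DSet (m l : ℕ) (θ : Set (Cyl m l)) : Set (Hw (m + l)) :=
  {β | β ∈ Rpos (m + l) ∧ pairP m l θ β = -1}

/-- The "inversion set" R(w_θ) = {hk(x) : x ∈ θ}. -/
def RwTheta (m l : ℕ) (θ : Set (Cyl m l)) : Set (Hw (m + l)) := hk m l θ '' θ

/-- The set Π_θ = Π_θ^0 ∪ Π_θ^arm ∪ Π_θ^leg. -/
def PiTheta (m l : ℕ) (θ : Set (Cyl m l)) : Set (Hw (m + l)) :=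
  {v | ∃ x, x ∈ btm m l θ ∧ x ∉ btmMax m l θ ∧ x ∉ btmMin m l θ ∧ v = alC m l x} ∪
  {v | ∃ x, x ∈ btmMax m l θ ∧ v = alC m l x + ∑ᶠ y ∈ armSet m l θ x, alC m l y} ∪
  {v | ∃ x, x ∈ btmMax m l θ ∧ v = alC m l x + ∑ᶠ y ∈ legSet m l θ x, alC m l y}

/-- The modified order ⊴ on R(w_θ): α ⊴ β iff β - α ∈ Σ_{γ∈Π_θ} ℤ≥0 γ. -/
def trile (m l : ℕ) (θ : Set (Cyl m l)) (α β : Hw (m + l)) : Prop :=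
  β - α ∈ AddSubmonoid.closure (PiTheta m l θ)

/-! ## Standard tableaux (encoded by the inverse enumeration e = T⁻¹ : ℤ≥1 → θ) -/

/-- A standard tableau on θ, given by the enumeration e = T⁻¹ : {1,2,…} → θ.
This is precisely the data of an order-preserving bijection T : θ → ℤ≥1. -/
def IsTableau (m l : ℕ) (θ : Set (Cyl m l)) (e : ℕ → Cyl m l) : Prop :=
  Set.InjOn e {a : ℕ | 1 ≤ a} ∧ e '' {a : ℕ | 1 ≤ a} = θ ∧
  ∀ a b : ℕ, 1 ≤ a → 1 ≤ b → cle m l (e a) (e b) → e a ≠ e b → a < b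

/-- A standard tableau on a finite (skew) diagram ξ with |ξ| = n, encoded by
the enumeration e = S⁻¹ : {1,…,n} → ξ. -/
def IsTableauOn (m l : ℕ) (ξ : Set (Cyl m l)) (n : ℕ) (e : ℕ → Cyl m l) : Prop :=
  Set.InjOn e (Set.Icc 1 n) ∧ e '' Set.Icc 1 n = ξ ∧
  ∀ a b : ℕ, a ∈ Set.Icc 1 n → b ∈ Set.Icc 1 n → cle m l (e a) (e b) → e a ≠ e b → a < b

/-- The word (con(e 1), con(e 2), …, con(e n)). -/
def tabWord (m l : ℕ) (e : ℕ → Cyl m l) (n : ℕ) : List (ZMod (m + l)) :=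
  (List.range n).map (fun k => con m l (e (k + 1)))

/-- The semi-infinite Bruhat interval [e, w_{θ,T}) = ⋃_{n≥1} [e, w_{θ,T}[n]]. -/
def semiInt (m l : ℕ) (e : ℕ → Cyl m l) : Set (Hw (m + l) → Hw (m + l)) :=
  ⋃ n ∈ {n : ℕ | 1 ≤ n}, bint (m + l) (wordProd (m + l) (tabWord m l e n))

/-- w is P_θ-pluscule: ⟨P_θ, α^∨⟩ = -1 for every α ∈ R(w). -/
def Pluscule (m l : ℕ) (θ : Set (Cyl m l)) (w : Hw (m + l) → Hw (m + l)) : Prop :=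
  ∀ β ∈ invSet (m + l) w, pairP m l θ β = -1

/-- The generating relation of the heap order ⪯_T on ℤ≥1. -/
def heapRel (m l : ℕ) (e : ℕ → Cyl m l) (a b : ℕ) : Prop :=
  1 ≤ a ∧ a ≤ b ∧
    (con m l (e a) = con m l (e b) ∨
      sFun (m + l) (con m l (e a)) ∘ sFun (m + l) (con m l (e b)) ≠
        sFun (m + l) (con m l (e b)) ∘ sFun (m + l) (con m l (e a)))

/-- The generating relation of the heap order ≤^hp on R(w_θ):
α ≤ β whenever β - α ∈ Q₊ (the ordinary order) and ⟨α, β^∨⟩ ≠ 0. -/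
def hpRel (m l : ℕ) (θ : Set (Cyl m l)) (α β : Hw (m + l)) : Prop :=
  α ∈ RwTheta m l θ ∧ β ∈ RwTheta m l θ ∧ β - α ∈ QPos (m + l) ∧
    pairCo (m + l) α β ≠ 0

/-- v is the Weyl group element w_ξ of a proper order ideal ξ of θ. -/
def IsIdealWord (m l : ℕ) (θ ξ : Set (Cyl m l)) (v : Hw (m + l) → Hw (m + l)) : Prop :=
  IsProperIdealOf m l θ ξ ∧
    ∃ n e, IsTableauOn m l ξ n e ∧ v = wordProd (m + l) (tabWord m l e n)

/-- A proper order ideal of the poset (R(w_θ), ⊴). -/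
def IsProperIdealOfRw (m l : ℕ) (θ : Set (Cyl m l)) (J : Set (Hw (m + l))) : Prop :=
  J ⊆ RwTheta m l θ ∧ J ≠ RwTheta m l θ ∧
    ∀ β ∈ J, ∀ α ∈ RwTheta m l θ, trile m l θ α β → α ∈ J


/-! ### Simple reflections and words -/

lemma wordProd_nil (κ : ℕ) : wordProd κ [] = id := rfl

lemma wordProd_cons (κ : ℕ) (i : ZMod κ) (L : List (ZMod κ)) :
    wordProd κ (i :: L) = sFun κ i ∘ wordProd κ L := rfl

lemma wordProd_append (κ : ℕ) (L M : List (ZMod κ)) :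
    wordProd κ (L ++ M) = wordProd κ L ∘ wordProd κ M := by
  induction L with
  | nil => rfl
  | cons i L ih => rw [List.cons_append, wordProd_cons, wordProd_cons, ih]; rfl

lemma pairSimple_sub_smul (κ : ℕ) [NeZero κ] (ζ η : Hw κ) (c : ℚ) (i : ZMod κ) :
    pairSimple κ (ζ - c • η) i = pairSimple κ ζ i - c * pairSimple κ η i := by
  simp only [pairSimple, finsum_eq_sum_of_fintype, Prod.fst_sub, Prod.snd_sub, Prod.smul_fst,
    Prod.smul_snd, Pi.sub_apply, Pi.smul_apply, smul_eq_mul, sub_mul, Finset.sum_sub_distrib,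
    mul_add, Finset.mul_sum, mul_assoc]
  ring

lemma pairSimple_alphaR (κ : ℕ) [NeZero κ] (i j : ZMod κ) :
    pairSimple κ (alphaR κ j) i = cartan κ i j := by
  simp [pairSimple, finsum_eq_sum_of_fintype, alphaR, Pi.single_apply]

lemma cartan_self (κ : ℕ) (hκ : 2 ≤ κ) (i : ZMod κ) : cartan κ i i = 2 := by
  have : Fact (1 < κ) := ⟨hκ⟩
  simp [cartan]

lemma sFun_sFun (κ : ℕ) (hκ : 2 ≤ κ) (i : ZMod κ) (ζ : Hw κ) :
    sFun κ i (sFun κ i ζ) = ζ := by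
  have : NeZero κ := ⟨by omega⟩
  unfold sFun
  rw [pairSimple_sub_smul, pairSimple_alphaR, cartan_self κ hκ, sub_sub, ← add_smul]
  have : pairSimple κ ζ i + (pairSimple κ ζ i - pairSimple κ ζ i * 2) = 0 := by ring
  rw [this, zero_smul, sub_zero]

lemma sFun_comm (κ : ℕ) (hκ : 2 ≤ κ) (i j : ZMod κ) (h0 : i - j ≠ 0) (h1 : i - j ≠ 1)
    (h2 : i - j ≠ -1) : sFun κ i ∘ sFun κ j = sFun κ j ∘ sFun κ i := by
  have : NeZero κ := ⟨by omega⟩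
  have hij : cartan κ i j = 0 := by
    simp [cartan, h1, h2, sub_ne_zero.mp h0]
  have hji : cartan κ j i = 0 := by
    have e1 : j - i ≠ 1 := fun h => h2 (by rw [← h]; ring)
    have e2 : j - i ≠ -1 := fun h => h1 (by rw [← neg_sub, h, neg_neg])
    simp [cartan, e1, e2, (sub_ne_zero.mp h0).symm]
  funext ζ
  simp only [Function.comp, sFun, pairSimple_sub_smul, pairSimple_alphaR, hij, hji, mul_zero,
    sub_zero]
  abel

/-- The action of the inverse of `wordProd κ L`, applying the letters of `L` from left to right. -/
noncomputable def act (κ : ℕ) : List (ZMod κ) → Hw κ → Hw κ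
  | [], ζ => ζ
  | i :: L, ζ => act κ L (sFun κ i ζ)

lemma wordProd_act (κ : ℕ) (hκ : 2 ≤ κ) (L : List (ZMod κ)) (ζ : Hw κ) :
    wordProd κ L (act κ L ζ) = ζ := by
  induction L generalizing ζ with
  | nil => rfl
  | cons i L ih =>
    rw [wordProd_cons, act, Function.comp_apply, ih, sFun_sFun κ hκ]

lemma wordProd_injective (κ : ℕ) (hκ : 2 ≤ κ) (L : List (ZMod κ)) :
    Function.Injective (wordProd κ L) := by
  induction L with
  | nil => exact Function.injective_id
  | cons i L ih =>
    rw [wordProd_cons]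
    exact (Function.LeftInverse.injective (sFun_sFun κ hκ i)).comp ih

lemma act_eq_of_wordProd_eq (κ : ℕ) (hκ : 2 ≤ κ) {L M : List (ZMod κ)}
    (h : wordProd κ L = wordProd κ M) (ζ : Hw κ) : act κ L ζ = act κ M ζ := by
  apply wordProd_injective κ hκ L
  rw [wordProd_act κ hκ]
  rw [h, wordProd_act κ hκ]

lemma len_le (κ : ℕ) (L : List (ZMod κ)) : len κ (wordProd κ L) ≤ L.length :=
  Nat.sInf_le ⟨L, rfl, rfl⟩

lemma exists_word_len (κ : ℕ) (L : List (ZMod κ)) :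
    ∃ M : List (ZMod κ), M.length = len κ (wordProd κ L) ∧ wordProd κ M = wordProd κ L :=
  Nat.sInf_mem (s := {r : ℕ | ∃ M : List (ZMod κ), M.length = r ∧ wordProd κ M = wordProd κ L})
    ⟨L.length, L, rfl, rfl⟩

/-! ### Profiles and their weights -/

/-- The functions `ℤ → ℤ` which arise as profiles of cylindric diagrams. -/
def IsProfile (m l : ℕ) (p : ℤ → ℤ) : Prop :=
  (∀ j, p (j + 1) = p j ∨ p (j + 1) = p j - 1) ∧ ∀ j, p (j + ((m + l : ℕ) : ℤ)) = p j - m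

/-- The weight of a profile: the periodic function `j ↦ -p j - (m / κ) j`, read off at the
representatives in `[0, κ)`. -/
noncomputable def lam (m l : ℕ) (p : ℤ → ℤ) : Hw (m + l) :=
  (fun i => -(p (i.val : ℤ) : ℚ) - (m : ℚ) / ((m + l : ℕ) : ℚ) * (i.val : ℚ), 0)

/-- The sum of the coefficients of the simple roots. -/
def ht (κ : ℕ) [NeZero κ] (ζ : Hw κ) : ℚ := ∑ i, ζ.1 i

/-- The profile changed by `c` at all indices of residue `i`. -/
def mv (κ : ℕ) (p : ℤ → ℤ) (i : ZMod κ) (c : ℤ) (k : ℤ) : ℤ :=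
  if (k : ZMod κ) = i then p k + c else p k

/-- The pairing of the weight of a profile with `α_j^∨`. -/
def dd (p : ℤ → ℤ) (j : ℤ) : ℤ := (p (j - 1) - p j) + (p (j + 1) - p j)

lemma profile_mul {m l : ℕ} {p : ℤ → ℤ} (hp : IsProfile m l p) (j t : ℤ) :
    p (j + ((m + l : ℕ) : ℤ) * t) = p j - m * t := by
  induction t using Int.induction_on with
  | zero => simp
  | succ t ih =>
    have := hp.2 (j + ((m + l : ℕ) : ℤ) * t)
    rw [ih] at this
    rw [show j + ((m + l : ℕ) : ℤ) * ((t : ℤ) + 1)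
      = j + ((m + l : ℕ) : ℤ) * t + ((m + l : ℕ) : ℤ) by ring, this]
    ring
  | pred t ih =>
    have := hp.2 (j + ((m + l : ℕ) : ℤ) * (-t - 1))
    rw [show j + ((m + l : ℕ) : ℤ) * (-(t : ℤ) - 1) + ((m + l : ℕ) : ℤ)
      = j + ((m + l : ℕ) : ℤ) * (-t) by ring, ih] at this
    linarith

lemma exists_eq_add_mul {κ : ℕ} {j k : ℤ} (h : (j : ZMod κ) = (k : ZMod κ)) :
    ∃ t, j = k + (κ : ℤ) * t := by
  obtain ⟨t, ht⟩ := (ZMod.intCast_eq_intCast_iff_dvd_sub k j κ).mp h.symm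
  exact ⟨t, by linarith⟩

lemma dd_congr {m l : ℕ} {p : ℤ → ℤ} (hp : IsProfile m l p) {j k : ℤ}
    (h : (j : ZMod (m + l)) = (k : ZMod (m + l))) :
    dd p j = dd p k := by
  obtain ⟨t, rfl⟩ := exists_eq_add_mul h
  unfold dd
  rw [show k + ((m + l : ℕ) : ℤ) * t - 1 = k - 1 + ((m + l : ℕ) : ℤ) * t by ring,
    show k + ((m + l : ℕ) : ℤ) * t + 1 = k + 1 + ((m + l : ℕ) : ℤ) * t by ring,
    profile_mul hp, profile_mul hp, profile_mul hp]
  ring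

lemma lam_apply {m l : ℕ} (hκ : 2 ≤ m + l) {p : ℤ → ℤ} (hp : IsProfile m l p) (j : ℤ) :
    (lam m l p).1 (j : ZMod (m + l)) = -(p j : ℚ) - (m : ℚ) / ((m + l : ℕ) : ℚ) * j := by
  have : NeZero (m + l) := ⟨by omega⟩
  have h0 : ((m + l : ℕ) : ℚ) ≠ 0 := by exact_mod_cast (by omega : m + l ≠ 0)
  have h : (j : ZMod (m + l)) = (((j : ZMod (m + l)).val : ℤ) : ZMod (m + l)) := by simp
  obtain ⟨t, ht⟩ := exists_eq_add_mul h
  have h2 := profile_mul hp ((j : ZMod (m + l)).val : ℤ) t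
  rw [← ht] at h2
  have ht' : (j : ℚ) = ((j : ZMod (m + l)).val : ℚ) + ((m + l : ℕ) : ℚ) * t := by
    exact_mod_cast congrArg (Int.cast : ℤ → ℚ) ht
  simp only [lam]
  rw [h2, ht']
  push_cast at h0 ⊢
  field_simp
  ring

lemma pairSimple_lam {m l : ℕ} (hκ : 2 ≤ m + l) {p : ℤ → ℤ} (hp : IsProfile m l p) (j : ℤ) :
    pairSimple (m + l) (lam m l p) (j : ZMod (m + l)) = dd p j := by
  have : NeZero (m + l) := ⟨by omega⟩
  have e1 : ∀ x : ZMod (m + l),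
      ((j : ZMod (m + l)) - x = 1) = (x = ((j - 1 : ℤ) : ZMod (m + l))) := by
    intro x
    apply propext
    push_cast
    constructor <;> intro h
    · rw [← h]; ring
    · rw [h]; ring
  have e2 : ∀ x : ZMod (m + l),
      ((j : ZMod (m + l)) - x = -1) = (x = ((j + 1 : ℤ) : ZMod (m + l))) := by
    intro x
    apply propext
    push_cast
    constructor <;> intro h
    · rw [← sub_eq_iff_eq_add.mpr (sub_eq_iff_eq_add'.mp h)]; ring
    · rw [h]; ring
  have hz : (lam m l p).2 = 0 := rfl
  simp only [pairSimple, finsum_eq_sum_of_fintype, cartan, e1, e2, mul_add, Finset.sum_add_distrib,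
    mul_ite, mul_zero, Finset.sum_ite_eq, Finset.sum_ite_eq', Finset.mem_univ, if_true, hz,
    lam_apply hκ hp, zero_mul, ite_self, add_zero, dd]
  push_cast
  ring

lemma one_ne_zero_zmod {κ : ℕ} (hκ : 2 ≤ κ) : (1 : ZMod κ) ≠ 0 := by
  have : Fact (1 < κ) := ⟨hκ⟩
  exact one_ne_zero

lemma mv_profile {m l : ℕ} (hκ : 2 ≤ m + l) {p : ℤ → ℤ} (hp : IsProfile m l p) (j : ℤ) :
    IsProfile m l (mv (m + l) p (j : ZMod (m + l)) (dd p j)) := by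
  have h1 := one_ne_zero_zmod hκ
  refine ⟨fun k => ?_, fun k => ?_⟩
  · unfold mv
    by_cases hk : (k : ZMod (m + l)) = j
    · have hk1 : ((k + 1 : ℤ) : ZMod (m + l)) ≠ j := by
        push_cast
        rw [hk]
        simpa using h1
      rw [if_pos hk, if_neg hk1, ← dd_congr hp hk]
      have a := hp.1 k
      have b := hp.1 (k - 1)
      rw [sub_add_cancel] at b
      unfold dd
      omega
    · rw [if_neg hk]
      by_cases hk1 : ((k + 1 : ℤ) : ZMod (m + l)) = j
      · rw [if_pos hk1, ← dd_congr hp hk1]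
        have a := hp.1 k
        have b := hp.1 (k + 1)
        unfold dd
        rw [add_sub_cancel_right]
        omega
      · rw [if_neg hk1]
        exact hp.1 k
  · unfold mv
    have hc : ((k + ((m + l : ℕ) : ℤ) : ℤ) : ZMod (m + l)) = k := by
      rw [Int.cast_add, Int.cast_natCast, ZMod.natCast_self, add_zero]
    rw [hc]
    have := hp.2 k
    split_ifs <;> omega

lemma lam_mv {m l : ℕ} (hκ : 2 ≤ m + l) (p : ℤ → ℤ) (i : ZMod (m + l)) (c : ℤ) :
    lam m l (mv (m + l) p i c) = lam m l p - (c : ℚ) • alphaR (m + l) i := by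
  have : NeZero (m + l) := ⟨by omega⟩
  ext k
  · simp only [lam, mv, alphaR, Prod.fst_sub, Prod.smul_fst, Pi.sub_apply, Pi.smul_apply,
      Pi.single_apply, smul_eq_mul]
    have : (((k.val : ℤ)) : ZMod (m + l)) = k := by simp
    rw [this]
    split_ifs
    · push_cast; ring
    · ring
  · simp [lam, alphaR]

lemma sFun_lam {m l : ℕ} (hκ : 2 ≤ m + l) {p : ℤ → ℤ} (hp : IsProfile m l p) (j : ℤ) :
    sFun (m + l) (j : ZMod (m + l)) (lam m l p)
      = lam m l (mv (m + l) p (j : ZMod (m + l)) (dd p j)) := by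
  rw [lam_mv hκ, sFun, pairSimple_lam hκ hp]

lemma ht_lam_mv {m l : ℕ} [NeZero (m + l)] (hκ : 2 ≤ m + l) (p : ℤ → ℤ) (i : ZMod (m + l))
    (c : ℤ) : ht (m + l) (lam m l (mv (m + l) p i c)) = ht (m + l) (lam m l p) - c := by
  rw [lam_mv hκ]
  simp [ht, alphaR, Finset.sum_sub_distrib, ← Finset.mul_sum]

lemma dd_ge {m l : ℕ} {p : ℤ → ℤ} (hp : IsProfile m l p) (j : ℤ) : -1 ≤ dd p j := by
  have a := hp.1 j
  have b := hp.1 (j - 1)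
  rw [sub_add_cancel] at b
  unfold dd
  omega

/-- Each letter raises the height of the weight of a profile by at most one. -/
lemma ht_act_le {m l : ℕ} [NeZero (m + l)] (hκ : 2 ≤ m + l) (L : List (ZMod (m + l)))
    {p : ℤ → ℤ} (hp : IsProfile m l p) :
    ht (m + l) (act (m + l) L (lam m l p)) ≤ ht (m + l) (lam m l p) + L.length := by
  induction L generalizing p with
  | nil => simp [act]
  | cons i L ih =>
    obtain ⟨j, rfl⟩ := ZMod.intCast_surjective i
    rw [act, sFun_lam hκ hp]
    refine (ih (mv_profile hκ hp j)).trans ?_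
    rw [ht_lam_mv hκ]
    have : (-1 : ℚ) ≤ dd p j := by exact_mod_cast dd_ge hp j
    push_cast [List.length_cons]
    linarith

/-! ### Cells, diagrams and profiles -/

lemma con_pr (m l : ℕ) (a b : ℤ) : con m l (pr m l (a, b)) = ((b - a : ℤ) : ZMod (m + l)) := rfl

lemma exists_pr {m l : ℕ} (x : Cyl m l) : ∃ a j : ℤ, x = pr m l (a, a + j) := by
  obtain ⟨⟨a, b⟩, rfl⟩ := QuotientAddGroup.mk'_surjective _ x
  exact ⟨a, b - a, by simp [pr]⟩

lemma pr_eq_pr_iff {m l : ℕ} (a j b k : ℤ) :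
    pr m l (a, a + j) = pr m l (b, b + k) ↔
      ∃ t : ℤ, a = b + m * t ∧ j = k + ((m + l : ℕ) : ℤ) * -t := by
  have : pr m l (a, a + j) = pr m l (b, b + k) ↔
      (a, a + j) - (b, b + k) ∈ AddSubgroup.zmultiples (om m l) := by
    rw [← sub_eq_zero, ← map_sub]
    exact QuotientAddGroup.eq_zero_iff _
  rw [this, AddSubgroup.mem_zmultiples_iff]
  refine exists_congr fun t => ?_
  simp only [om, Prod.smul_mk, smul_eq_mul, Prod.mk_sub_mk, Prod.mk.injEq]
  push_cast
  constructor
  · rintro ⟨h1, h2⟩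
    exact ⟨by linarith, by linarith⟩
  · rintro ⟨h1, h2⟩
    exact ⟨by linarith, by linarith⟩

lemma cle_pr {m l : ℕ} {a b c d : ℤ} (h1 : c ≤ a) (h2 : d ≤ b) :
    cle m l (pr m l (a, b)) (pr m l (c, d)) := ⟨_, _, rfl, rfl, h1, h2⟩

/-- Cells with equal or adjacent contents are comparable. -/
lemma comparable_of_con {m l : ℕ} (x y : Cyl m l)
    (h : con m l x - con m l y = 0 ∨ con m l x - con m l y = 1 ∨ con m l x - con m l y = -1) :
    cle m l x y ∨ cle m l y x := by
  obtain ⟨a, j, rfl⟩ := exists_pr x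
  obtain ⟨b, k, rfl⟩ := exists_pr y
  have key : ∃ s : ℤ, (s = 0 ∨ s = 1 ∨ s = -1) ∧
      (j : ZMod (m + l)) = ((k + s : ℤ) : ZMod (m + l)) := by
    rw [con_pr, con_pr, add_sub_cancel_left, add_sub_cancel_left] at h
    rcases h with h | h | h
    · exact ⟨0, by simp, by rw [sub_eq_iff_eq_add.mp h]; push_cast; ring⟩
    · exact ⟨1, by simp, by rw [sub_eq_iff_eq_add.mp h]; push_cast; ring⟩
    · exact ⟨-1, by simp, by rw [sub_eq_iff_eq_add.mp h]; push_cast; ring⟩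
  obtain ⟨s, hs, hj⟩ := key
  obtain ⟨t, rfl⟩ := exists_eq_add_mul hj
  have e : pr m l (a, a + (k + s + ((m + l : ℕ) : ℤ) * t)) =
      pr m l (a + m * t, (a + m * t) + (k + s)) := by
    rw [pr_eq_pr_iff]
    exact ⟨-t, by ring, by ring⟩
  rw [e]
  clear h
  generalize a + m * t = a'
  rcases le_or_gt a' b with h | h
  · rcases hs with rfl | rfl | rfl
    · exact Or.inr (cle_pr h (by omega))
    · rcases h.eq_or_lt with h | h
      · exact Or.inl (cle_pr (by omega) (by omega))
      · exact Or.inr (cle_pr (by omega) (by omega))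
    · exact Or.inr (cle_pr h (by omega))
  · exact Or.inl (cle_pr (by omega) (by omega))

/-- `p j` is the largest `a` with `π(a, a + j) ∈ F`. -/
def HasProf (m l : ℕ) (F : Set (Cyl m l)) (p : ℤ → ℤ) : Prop :=
  IsProfile m l p ∧ ∀ a j : ℤ, pr m l (a, a + j) ∈ F ↔ a ≤ p j

lemma exists_prof {m l : ℕ} {F : Set (Cyl m l)} (hF : IsCylindric m l F) :
    ∃ p, HasProf m l F p := by
  obtain ⟨⟨x, hx⟩, hne, hup⟩ := hF
  obtain ⟨a₀, j₀, rfl⟩ := exists_pr x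
  obtain ⟨y, hy⟩ := (Set.ne_univ_iff_exists_notMem F).mp hne
  obtain ⟨a₁, j₁, rfl⟩ := exists_pr y
  have hex : ∀ j : ℤ, ∃ q : ℤ, ∀ a : ℤ, pr m l (a, a + j) ∈ F ↔ a ≤ q := by
    intro j
    obtain ⟨q, hq, hmax⟩ := Int.exists_greatest_of_bdd
      (P := fun a => pr m l (a, a + j) ∈ F)
      ⟨max a₁ (a₁ + j₁ - j), fun z hz => by
        by_contra hlt
        push Not at hlt
        have := max_lt_iff.mp hlt
        exact hy (hup _ hz _ (cle_pr (by omega) (by omega)))⟩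
      ⟨min a₀ (a₀ + j₀ - j), hup _ hx _ (cle_pr (min_le_left _ _) (by
        have := min_le_right a₀ (a₀ + j₀ - j)
        omega))⟩
    exact ⟨q, fun a => ⟨fun h => hmax a h, fun h => hup _ hq _ (cle_pr h (by omega))⟩⟩
  choose p hp using hex
  refine ⟨p, ⟨fun j => ?_, fun j => ?_⟩, fun a j => hp j a⟩
  · have h1 : p j - 1 ≤ p (j + 1) :=
      (hp _ _).mp (hup _ ((hp j (p j)).mpr le_rfl) _ (cle_pr (by omega) (by omega)))
    have h2 : p (j + 1) ≤ p j :=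
      (hp _ _).mp (hup _ ((hp (j + 1) (p (j + 1))).mpr le_rfl) _ (cle_pr (by omega) (by omega)))
    omega
  · have e : ∀ a, pr m l (a, a + (j + ((m + l : ℕ) : ℤ))) = pr m l (a + m, (a + m) + j) := by
      intro a
      rw [pr_eq_pr_iff]
      exact ⟨-1, by ring, by ring⟩
    have h : ∀ a, a ≤ p (j + ((m + l : ℕ) : ℤ)) ↔ a + m ≤ p j := by
      intro a
      rw [← hp, ← hp, e]
    have h1 := (h _).mp le_rfl
    have h2 := (h (p j - m)).mpr (by omega)
    omega

/-- `x` is a minimal cell of `F`. -/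
def IsMinCell (m l : ℕ) (F : Set (Cyl m l)) (x : Cyl m l) : Prop :=
  x ∈ F ∧ ∀ y ∈ F, cle m l y x → y = x

lemma prof_remove {m l : ℕ} (hκ : 2 ≤ m + l) {F : Set (Cyl m l)} {p : ℤ → ℤ}
    (hp : HasProf m l F p) (j : ℤ) (hd : dd p j = -1) :
    HasProf m l (F \ {pr m l (p j, p j + j)}) (mv (m + l) p (j : ZMod (m + l)) (-1)) := by
  refine ⟨hd ▸ mv_profile hκ hp.1 j, fun a k => ?_⟩
  have key : pr m l (a, a + k) = pr m l (p j, p j + j) ↔ (k : ZMod (m + l)) = j ∧ a = p k := by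
    rw [pr_eq_pr_iff]
    constructor
    · rintro ⟨t, rfl, rfl⟩
      refine ⟨?_, ?_⟩
      · rw [Int.cast_add, Int.cast_mul, Int.cast_natCast, ZMod.natCast_self, zero_mul, add_zero]
      · rw [profile_mul hp.1]; ring
    · rintro ⟨hk, rfl⟩
      obtain ⟨t, rfl⟩ := exists_eq_add_mul hk
      exact ⟨-t, by rw [profile_mul hp.1]; ring, by ring⟩
  rw [Set.mem_sdiff, Set.mem_singleton_iff, key, hp.2, mv]
  split_ifs with h
  · simp only [h, true_and]
    omega
  · simp only [h, false_and, not_false_iff, and_true]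

/-- A place where the pairing is `-1` carries a minimal cell. -/
lemma minCell_of_dd {m l : ℕ} {F : Set (Cyl m l)} (hF : IsCylindric m l F) {p : ℤ → ℤ}
    (hp : HasProf m l F p) (j : ℤ) (hd : dd p j = -1) :
    IsMinCell m l F (pr m l (p j, p j + j)) := by
  have h1 := hp.1.1 j
  have h2 := hp.1.1 (j - 1)
  rw [sub_add_cancel] at h2
  unfold dd at hd
  refine ⟨(hp.2 _ _).mpr le_rfl, ?_⟩
  rintro y hy ⟨⟨a, b⟩, ⟨c, d⟩, rfl, hcd, h3, h4⟩
  -- Translate the lift of `y` so that it lies below the chosen lift of the minimal cell.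
  obtain ⟨k, rfl⟩ : ∃ k, d = c + k := ⟨d - c, by ring⟩
  obtain ⟨t, rfl, rfl⟩ := (pr_eq_pr_iff _ _ _ _).mp hcd
  simp only at h3 h4
  have e : pr m l (a, b) = pr m l (a - m * t, (a - m * t) + (b - a + ((m + l : ℕ) : ℤ) * t)) := by
    conv_lhs => rw [show b = a + (b - a) by ring]
    rw [pr_eq_pr_iff]
    exact ⟨t, by ring, by ring⟩
  have h5 : p j ≤ a - m * t := by linarith
  have h6 : p j + j ≤ (a - m * t) + (b - a + ((m + l : ℕ) : ℤ) * t) := by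
    push_cast at h4 ⊢
    linarith
  rw [e] at hy ⊢
  generalize hA : a - m * t = A at *
  generalize hB : b - a + ((m + l : ℕ) : ℤ) * t = B at *
  -- A cell of `F` strictly below would force one of the two lower neighbours into `F`.
  rcases h5.eq_or_lt with h5 | h5
  · rcases (show j ≤ B by omega).eq_or_lt with h7 | h7
    · rw [← h5, ← h7]
    · exfalso
      have := (hp.2 (p j) (j + 1)).mp (hF.2.2 _ hy _ (cle_pr (by omega) (by omega)))
      omega
  · exfalso
    have := (hp.2 (p j + 1) (j - 1)).mp (hF.2.2 _ hy _ (cle_pr (by omega) (by omega)))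
    omega

lemma minCell_prof {m l : ℕ} (hκ : 2 ≤ m + l) {F : Set (Cyl m l)} {p : ℤ → ℤ}
    (hp : HasProf m l F p) {x : Cyl m l} (hx : IsMinCell m l F x) :
    ∃ j : ℤ, x = pr m l (p j, p j + j) ∧ dd p j = -1 := by
  have hone := one_ne_zero_zmod hκ
  obtain ⟨a, j, rfl⟩ := exists_pr x
  have ha := (hp.2 _ _).mp hx.1
  have e := hx.2 _ ((hp.2 (p j) j).mpr le_rfl) (cle_pr ha (by omega))
  refine ⟨j, e.symm, ?_⟩
  rw [← e] at hx
  have h1 := hp.1.1 j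
  have h2 := hp.1.1 (j - 1)
  rw [sub_add_cancel] at h2
  have g1 : p (j + 1) ≠ p j := by
    intro h
    have := hx.2 _ ((hp.2 (p j) (j + 1)).mpr h.ge) (cle_pr le_rfl (by omega))
    have := congrArg (con m l) this
    rw [con_pr, con_pr] at this
    push_cast at this
    apply hone
    linear_combination this
  have g2 : p (j - 1) ≠ p j + 1 := by
    intro h
    have := hx.2 _ ((hp.2 (p j + 1) (j - 1)).mpr h.ge) (cle_pr (by omega) (by omega))
    have := congrArg (con m l) this
    rw [con_pr, con_pr] at this
    push_cast at this
    apply hone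
    linear_combination -this
  unfold dd
  omega

lemma cyl_remove {m l : ℕ} (hκ : 2 ≤ m + l) {F : Set (Cyl m l)} (hF : IsCylindric m l F)
    {x : Cyl m l} (hx : IsMinCell m l F x) : IsCylindric m l (F \ {x}) := by
  obtain ⟨p, hp⟩ := exists_prof hF
  obtain ⟨j, rfl, hd⟩ := minCell_prof hκ hp hx
  refine ⟨⟨_, ((prof_remove hκ hp j hd).2 _ 0).mpr le_rfl⟩, ?_, ?_⟩
  · intro h
    have : pr m l (p j, p j + j) ∈ F \ {pr m l (p j, p j + j)} := h ▸ Set.mem_univ _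
    exact this.2 rfl
  · rintro z ⟨hz, hzx⟩ w hzw
    refine ⟨hF.2.2 z hz w hzw, ?_⟩
    rintro rfl
    exact hzx (hx.2 z hz hzw)

/-! ### Removal sequences -/

/-- The cells of the list can be removed from `F` one after the other, each being minimal
at its turn. Such lists are the standard tableaux on finite order ideals of `F`. -/
def Peel (m l : ℕ) : Set (Cyl m l) → List (Cyl m l) → Prop
  | _, [] => True
  | F, x :: xs => IsMinCell m l F x ∧ Peel m l (F \ {x}) xs

/-- The set of entries of a list of cells. -/
def lset {m l : ℕ} (xs : List (Cyl m l)) : Set (Cyl m l) := {x | x ∈ xs}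

/-- The Weyl group element of a list of cells. -/
noncomputable def cw (m l : ℕ) (xs : List (Cyl m l)) : Hw (m + l) → Hw (m + l) :=
  wordProd (m + l) (xs.map (con m l))

lemma diff_lset_cons {m l : ℕ} (F : Set (Cyl m l)) (x : Cyl m l) (xs : List (Cyl m l)) :
    F \ lset (x :: xs) = (F \ {x}) \ lset xs := by
  ext y
  simp [lset, and_assoc]

lemma peel_append {m l : ℕ} (F : Set (Cyl m l)) (xs ys : List (Cyl m l)) :
    Peel m l F (xs ++ ys) ↔ Peel m l F xs ∧ Peel m l (F \ lset xs) ys := by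
  induction xs generalizing F with
  | nil => simp [Peel, lset]
  | cons x xs ih =>
    rw [List.cons_append, Peel, Peel, ih, diff_lset_cons, and_assoc]

lemma peel_subset {m l : ℕ} {F : Set (Cyl m l)} {xs : List (Cyl m l)} (h : Peel m l F xs) :
    ∀ x ∈ xs, x ∈ F := by
  induction xs generalizing F with
  | nil => simp
  | cons y xs ih =>
    intro x hx
    rcases List.mem_cons.mp hx with rfl | hx
    · exact h.1.1
    · exact (ih h.2 x hx).1

lemma peel_lower {m l : ℕ} {F : Set (Cyl m l)} {xs : List (Cyl m l)} (h : Peel m l F xs) :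
    ∀ x ∈ xs, ∀ y ∈ F, cle m l y x → y ∈ xs := by
  induction xs generalizing F with
  | nil => simp
  | cons z xs ih =>
    intro x hx y hy hyx
    rcases List.mem_cons.mp hx with rfl | hx
    · rw [h.1.2 y hy hyx]; exact List.mem_cons_self
    · by_cases hyz : y = z
      · rw [hyz]; exact List.mem_cons_self
      · exact List.mem_cons_of_mem _ (ih h.2 x hx y ⟨hy, hyz⟩ hyx)

lemma act_peel_ht {m l : ℕ} [NeZero (m + l)] (hκ : 2 ≤ m + l) {F : Set (Cyl m l)}
    {xs : List (Cyl m l)} (h : Peel m l F xs) {p : ℤ → ℤ} (hp : HasProf m l F p) :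
    ht (m + l) (act (m + l) (xs.map (con m l)) (lam m l p))
      = ht (m + l) (lam m l p) + xs.length := by
  induction xs generalizing F p with
  | nil => simp [act]
  | cons x xs ih =>
    obtain ⟨j, rfl, hd⟩ := minCell_prof hκ hp h.1
    rw [List.map_cons, act, con_pr, add_sub_cancel_left, sFun_lam hκ hp.1, hd,
      ih h.2 (prof_remove hκ hp j hd), ht_lam_mv hκ]
    push_cast [List.length_cons]
    ring

/-- A word that raises the height by its length is the content word of a removal sequence. -/
lemma exists_peel_of_ht {m l : ℕ} [NeZero (m + l)] (hκ : 2 ≤ m + l) {F : Set (Cyl m l)}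
    (hF : IsCylindric m l F) {p : ℤ → ℤ} (hp : HasProf m l F p) (L : List (ZMod (m + l)))
    (h : ht (m + l) (act (m + l) L (lam m l p)) = ht (m + l) (lam m l p) + L.length) :
    ∃ ys, Peel m l F ys ∧ ys.map (con m l) = L := by
  induction L generalizing F p with
  | nil => exact ⟨[], trivial, rfl⟩
  | cons i L ih =>
    obtain ⟨j, rfl⟩ := ZMod.intCast_surjective i
    rw [act, sFun_lam hκ hp.1] at h
    have hle := ht_act_le hκ L (mv_profile hκ hp.1 j)
    have hd : dd p j = -1 := by
      refine le_antisymm ?_ (dd_ge hp.1 j)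
      rw [h, ht_lam_mv hκ] at hle
      push_cast [List.length_cons] at hle
      have : (dd p j : ℚ) ≤ -1 := by linarith
      exact_mod_cast this
    have hmin := minCell_of_dd hF hp j hd
    rw [hd] at h
    obtain ⟨ys, hys, hmap⟩ := ih (cyl_remove hκ hF hmin) (prof_remove hκ hp j hd) (by
      rw [h, ht_lam_mv hκ]
      push_cast [List.length_cons]
      ring)
    refine ⟨_ :: ys, ⟨hmin, hys⟩, ?_⟩
    rw [List.map_cons, hmap, con_pr, add_sub_cancel_left]

/-- Words of removal sequences are reduced, and all reduced words of the same element
are words of removal sequences. -/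
lemma peel_word_rigid {m l : ℕ} (hκ : 2 ≤ m + l) {F : Set (Cyl m l)} (hF : IsCylindric m l F)
    {xs : List (Cyl m l)} (h : Peel m l F xs) {L : List (ZMod (m + l))}
    (hL : wordProd (m + l) L = cw m l xs) :
    xs.length ≤ L.length ∧
      (L.length = xs.length → ∃ ys, Peel m l F ys ∧ ys.map (con m l) = L) := by
  have : NeZero (m + l) := ⟨by omega⟩
  obtain ⟨p, hp⟩ := exists_prof hF
  have e := act_peel_ht hκ h hp
  rw [← act_eq_of_wordProd_eq (m + l) hκ hL] at e
  refine ⟨?_, fun hlen => exists_peel_of_ht hκ hF hp L (by rw [e, hlen])⟩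
  have hle := ht_act_le hκ L hp.1
  rw [e] at hle
  have : (xs.length : ℚ) ≤ L.length := by linarith
  exact_mod_cast this

lemma len_peel {m l : ℕ} (hκ : 2 ≤ m + l) {F : Set (Cyl m l)} (hF : IsCylindric m l F)
    {xs : List (Cyl m l)} (h : Peel m l F xs) : len (m + l) (cw m l xs) = xs.length := by
  apply le_antisymm
  · simpa [cw] using len_le (m + l) (xs.map (con m l))
  · obtain ⟨M, hM, hw⟩ := exists_word_len (m + l) (xs.map (con m l))
    rw [cw, ← hM]
    exact (peel_word_rigid hκ hF h hw).1

lemma wble_peel {m l : ℕ} (hκ : 2 ≤ m + l) {F : Set (Cyl m l)} (hF : IsCylindric m l F)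
    (xs ys : List (Cyl m l)) (h : Peel m l F (xs ++ ys)) :
    wble (m + l) (cw m l xs) (cw m l (xs ++ ys)) := by
  induction ys using List.reverseRecOn with
  | nil => rw [List.append_nil]; exact Relation.ReflTransGen.refl
  | append_singleton ys y ih =>
    rw [← List.append_assoc] at h ⊢
    have h' := ((peel_append _ _ _).mp h).1
    refine (ih h').tail ⟨con m l y, ?_, ?_⟩
    · rw [cw, List.map_append, wordProd_append]; rfl
    · rw [len_peel hκ hF h, len_peel hκ hF h', List.length_append, List.length_singleton]

/-- One step down in the weak order from the element of a removal sequence. -/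
lemma peel_descent {m l : ℕ} (hκ : 2 ≤ m + l) {F : Set (Cyl m l)} (hF : IsCylindric m l F)
    {xs : List (Cyl m l)} (h : Peel m l F xs) {u : Hw (m + l) → Hw (m + l)} {i : ZMod (m + l)}
    (hu : cw m l xs = u ∘ sFun (m + l) i)
    (hlen : len (m + l) (cw m l xs) = len (m + l) u + 1) :
    ∃ ys, Peel m l F ys ∧ u = cw m l ys := by
  have hs : sFun (m + l) i ∘ sFun (m + l) i = id := funext (sFun_sFun (m + l) hκ i)
  have hu' : u = wordProd (m + l) (xs.map (con m l) ++ [i]) := by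
    rw [wordProd_append, ← cw, hu]
    show u = (u ∘ sFun (m + l) i) ∘ (sFun (m + l) i ∘ id)
    rw [Function.comp_id, Function.comp_assoc, hs, Function.comp_id]
  obtain ⟨M, hM, hw⟩ := exists_word_len (m + l) (xs.map (con m l) ++ [i])
  rw [← hu'] at hM hw
  have hMi : wordProd (m + l) (M ++ [i]) = cw m l xs := by
    rw [wordProd_append, hw, hu]; rfl
  rw [len_peel hκ hF h] at hlen
  obtain ⟨zs, hz, hmap⟩ := (peel_word_rigid hκ hF h hMi).2 (by simp [hM, hlen])
  obtain ⟨ys, y, rfl, hy, -⟩ := List.map_eq_append_iff.mp hmap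
  exact ⟨ys, ((peel_append _ _ _).mp hz).1, by rw [cw, hy, hw]⟩

/-- A minimal cell can be moved to the front of a removal sequence containing it. -/
lemma peel_to_front {m l : ℕ} (hκ : 2 ≤ m + l) {F : Set (Cyl m l)} {xs : List (Cyl m l)}
    (h : Peel m l F xs) {y : Cyl m l} (hy : IsMinCell m l F y) (hmem : y ∈ xs) :
    ∃ zs, Peel m l (F \ {y}) zs ∧ cw m l xs = cw m l (y :: zs) ∧ lset xs ⊆ lset (y :: zs) := by
  induction xs generalizing F with
  | nil => simp at hmem
  | cons x xs ih =>
    by_cases hxy : y = x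
    · subst hxy
      exact ⟨xs, h.2, rfl, subset_rfl⟩
    · have hmem' : y ∈ xs := by simpa [hxy] using hmem
      have hyx : IsMinCell m l (F \ {x}) y :=
        ⟨⟨hy.1, hxy⟩, fun w hw hwy => hy.2 w hw.1 hwy⟩
      obtain ⟨zs, hz, hc, hsub⟩ := ih h.2 hyx hmem'
      refine ⟨x :: zs, ⟨⟨⟨h.1.1, fun e => hxy e.symm⟩, fun w hw hwx => h.1.2 w hw.1 hwx⟩, ?_⟩,
        ?_, ?_⟩
      · rwa [Set.sdiff_sdiff_comm]
      · -- Distinct minimal cells are incomparable, so their reflections commute.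
        have hcomp : ∀ c, (c = 0 ∨ c = 1 ∨ c = -1) → con m l x - con m l y ≠ c := by
          rintro c hc rfl
          rcases comparable_of_con x y hc with g | g
          · exact hxy (hy.2 x h.1.1 g).symm
          · exact hxy (h.1.2 y hy.1 g)
        have comm := sFun_comm (m + l) hκ (con m l x) (con m l y) (hcomp 0 (by simp))
          (hcomp 1 (by simp)) (hcomp (-1) (by simp))
        have hc' : cw m l (x :: xs) = sFun (m + l) (con m l x) ∘ cw m l xs := rfl
        rw [hc', hc]
        exact congrArg (· ∘ cw m l zs) comm
      · intro w hw
        rcases List.mem_cons.mp hw with rfl | hw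
        · simp [lset]
        · have := hsub hw
          simp only [lset, List.mem_cons, Set.mem_ofPred_eq] at this ⊢
          tauto

/-- A removal sequence extends to one for any larger finite ideal,
without changing the Weyl group element of the latter. -/
lemma peel_extend {m l : ℕ} (hκ : 2 ≤ m + l) {F : Set (Cyl m l)} {xs ts : List (Cyl m l)}
    (hx : Peel m l F xs) (ht : Peel m l F ts) (hsub : lset xs ⊆ lset ts) :
    ∃ rs, Peel m l F (xs ++ rs) ∧ cw m l ts = cw m l (xs ++ rs) := by
  induction xs generalizing F ts with
  | nil => exact ⟨ts, ht, rfl⟩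
  | cons x xs ih =>
    obtain ⟨zs, hz, hc, hs⟩ := peel_to_front hκ ht hx.1 (hsub List.mem_cons_self)
    obtain ⟨rs, hr, hword⟩ := ih hx.2 hz (by
      intro w hw
      rcases List.mem_cons.mp (hs (hsub (List.mem_cons_of_mem _ hw))) with rfl | h
      · exact absurd rfl (peel_subset hx.2 _ hw).2
      · exact h)
    refine ⟨rs, ⟨hx.1, hr⟩, ?_⟩
    rw [hc]
    exact congrArg (sFun (m + l) (con m l x) ∘ ·) hword

/-! ### Tableaux as removal sequences -/

/-- The list of the first `n` entries of an enumeration. -/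
def tlist {m l : ℕ} (e : ℕ → Cyl m l) (n : ℕ) : List (Cyl m l) :=
  (List.range n).map fun k => e (k + 1)

lemma mem_tlist {m l : ℕ} {e : ℕ → Cyl m l} {n : ℕ} {x : Cyl m l} :
    x ∈ tlist e n ↔ ∃ k, 1 ≤ k ∧ k ≤ n ∧ e k = x := by
  simp only [tlist, List.mem_map, List.mem_range]
  constructor
  · rintro ⟨k, hk, rfl⟩
    exact ⟨k + 1, by omega, by omega, rfl⟩
  · rintro ⟨k, h1, h2, rfl⟩
    exact ⟨k - 1, by omega, by rw [Nat.sub_add_cancel h1]⟩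

lemma cw_tlist {m l : ℕ} (e : ℕ → Cyl m l) (n : ℕ) :
    cw m l (tlist e n) = wordProd (m + l) (tabWord m l e n) := by
  simp [cw, tlist, tabWord, Function.comp_def]

lemma peel_tlist {m l : ℕ} {F : Set (Cyl m l)} {e : ℕ → Cyl m l} {n : ℕ}
    (hmem : ∀ k, 1 ≤ k → k ≤ n → e k ∈ F) (hinj : Set.InjOn e (Set.Icc 1 n))
    (hlow : ∀ k, 1 ≤ k → k ≤ n → ∀ y ∈ F, cle m l y (e k) → ∃ j, 1 ≤ j ∧ j ≤ k ∧ e j = y) :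
    Peel m l F (tlist e n) := by
  induction n with
  | zero => exact trivial
  | succ n ih =>
    have : tlist e (n + 1) = tlist e n ++ [e (n + 1)] := by
      simp [tlist, List.range_succ]
    rw [this, peel_append]
    refine ⟨ih (fun k h1 h2 => hmem k h1 (by omega))
      (hinj.mono (Set.Icc_subset_Icc_right (by omega)))
      (fun k h1 h2 => hlow k h1 (by omega)), ⟨⟨hmem _ (by omega) le_rfl, ?_⟩, ?_⟩, trivial⟩
    · intro h
      obtain ⟨k, h1, h2, h3⟩ := mem_tlist.mp h
      have := hinj ⟨h1, by omega⟩ ⟨by omega, le_rfl⟩ h3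
      omega
    · rintro y ⟨hy, hy'⟩ hle
      obtain ⟨j, h1, h2, rfl⟩ := hlow _ (by omega) le_rfl y hy hle
      rcases h2.eq_or_lt with h2 | h2
      · rw [h2]
      · exact absurd (mem_tlist.mpr ⟨j, h1, by omega, rfl⟩) hy'

lemma peel_of_tableauOn {m l : ℕ} {θ ξ : Set (Cyl m l)} (hξ : IsProperIdealOf m l θ ξ)
    {n : ℕ} {e : ℕ → Cyl m l} (he : IsTableauOn m l ξ n e) : Peel m l θ (tlist e n) := by
  obtain ⟨hinj, himg, hord⟩ := he
  have hmem : ∀ k, 1 ≤ k → k ≤ n → e k ∈ ξ := fun k h1 h2 => himg ▸ ⟨k, ⟨h1, h2⟩, rfl⟩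
  refine peel_tlist (fun k h1 h2 => hξ.1 (hmem k h1 h2)) hinj ?_
  intro k h1 h2 y hy hle
  have : y ∈ e '' Set.Icc 1 n := himg ▸ hξ.2.2 _ (hmem k h1 h2) y hy hle
  obtain ⟨j, hj, rfl⟩ := this
  refine ⟨j, hj.1, ?_, rfl⟩
  by_cases h : e j = e k
  · exact (hinj hj ⟨h1, h2⟩ h).le
  · exact (hord j k hj ⟨h1, h2⟩ hle h).le

lemma peel_of_tableau {m l : ℕ} {θ : Set (Cyl m l)} {e : ℕ → Cyl m l}
    (he : IsTableau m l θ e) (n : ℕ) : Peel m l θ (tlist e n) := by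
  obtain ⟨hinj, himg, hord⟩ := he
  refine peel_tlist (fun k h1 _ => himg ▸ ⟨k, h1, rfl⟩) (hinj.mono fun k hk => hk.1) ?_
  intro k h1 h2 y hy hle
  rw [← himg] at hy
  obtain ⟨j, hj, rfl⟩ := hy
  refine ⟨j, hj, ?_, rfl⟩
  by_cases h : e j = e k
  · exact (hinj hj h1 h).le
  · exact (hord j k hj h1 hle h).le

lemma peel_pairwise {m l : ℕ} {F : Set (Cyl m l)} {xs : List (Cyl m l)} (h : Peel m l F xs) :
    xs.Pairwise fun x y => x ≠ y ∧ ¬ cle m l y x := by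
  induction xs generalizing F with
  | nil => exact List.Pairwise.nil
  | cons x xs ih =>
    refine List.Pairwise.cons (fun y hy => ?_) (ih h.2)
    have := peel_subset h.2 y hy
    exact ⟨fun e => this.2 e.symm, fun hle => this.2 (h.1.2 y this.1 hle)⟩

lemma exists_tableauOn {m l : ℕ} {F : Set (Cyl m l)} {xs : List (Cyl m l)}
    (h : Peel m l F xs) :
    ∃ e : ℕ → Cyl m l, IsTableauOn m l (lset xs) xs.length e ∧ tlist e xs.length = xs := by
  have hpw := List.pairwise_iff_getElem.mp (peel_pairwise h)
  let e : ℕ → Cyl m l := fun k => xs.getD (k - 1) 0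
  have hget : ∀ k (h1 : 1 ≤ k) (h2 : k ≤ xs.length),
      e k = xs[k - 1]'(by omega) := fun k h1 h2 => List.getD_eq_getElem _ _ (by omega)
  have hlist : tlist e xs.length = xs := by
    apply List.ext_getElem
    · simp [tlist]
    · intro i h1 h2
      simp [tlist, e, h2]
  refine ⟨e, ⟨?_, ?_, ?_⟩, hlist⟩
  · rintro a ⟨ha1, ha2⟩ b ⟨hb1, hb2⟩ hab
    rw [hget a ha1 ha2, hget b hb1 hb2] at hab
    rcases lt_trichotomy a b with g | g | g
    · exact absurd hab (hpw (a - 1) (b - 1) (by omega) (by omega) (by omega)).1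
    · exact g
    · exact absurd hab.symm (hpw (b - 1) (a - 1) (by omega) (by omega) (by omega)).1
  · ext x
    have : x ∈ lset xs ↔ x ∈ tlist e xs.length := by rw [hlist]; rfl
    rw [this, mem_tlist]
    simp [and_assoc]
  · rintro a b ⟨ha1, ha2⟩ ⟨hb1, hb2⟩ hle hne
    by_contra hlt
    rcases (not_lt.mp hlt).eq_or_lt with g | g
    · exact hne (by rw [g])
    · rw [hget a ha1 ha2, hget b hb1 hb2] at hle
      exact (hpw (b - 1) (a - 1) (by omega) (by omega) (by omega)).2 hle

lemma isIdealWord_of_peel {m l : ℕ} {θ : Set (Cyl m l)} {e : ℕ → Cyl m l}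
    (he : IsTableau m l θ e) {ys : List (Cyl m l)} (h : Peel m l θ ys) :
    IsIdealWord m l θ (lset ys) (cw m l ys) := by
  obtain ⟨f, hf, hlist⟩ := exists_tableauOn h
  refine ⟨⟨peel_subset h, ?_, peel_lower h⟩, _, f, hf, ?_⟩
  · -- An ideal given by a list is finite, whereas `θ` is infinite.
    intro heq
    have hfin : θ.Finite := heq ▸ ys.finite_toSet
    rw [← he.2.1] at hfin
    exact (Set.Ici_infinite 1) (hfin.of_finite_image he.1)
  · rw [← cw_tlist, hlist]

/-- Lemma 4.6: v ∈ [e, w_θ) iff v = w_ξ for some proper order ideal ξ of θ. -/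
theorem statement_17 (m l : ℕ) (hm : 1 ≤ m) (hl : 1 ≤ l)
    (θ : Set (Cyl m l)) (hθ : IsCylindric m l θ)
    (e : ℕ → Cyl m l) (he : IsTableau m l θ e) (v : Hw (m + l) → Hw (m + l)) :
    v ∈ semiInt m l e ↔ ∃ ξ : Set (Cyl m l), IsIdealWord m l θ ξ v := by
  have hκ : 2 ≤ m + l := by omega
  constructor
  · intro hv
    obtain ⟨n, -, -, hvw⟩ := Set.mem_iUnion₂.mp hv
    rw [← cw_tlist] at hvw
    have key : ∃ ys, Peel m l θ ys ∧ v = cw m l ys := by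
      refine Relation.ReflTransGen.head_induction_on
        (motive := fun u _ => ∃ ys, Peel m l θ ys ∧ u = cw m l ys) hvw
        ⟨_, peel_of_tableau he n, rfl⟩ ?_
      rintro u u' ⟨i, hu, hlen⟩ - ⟨xs, hxs, rfl⟩
      exact peel_descent hκ hθ hxs hu hlen
    obtain ⟨ys, hys, rfl⟩ := key
    exact ⟨_, isIdealWord_of_peel he hys⟩
  · rintro ⟨ξ, hξ, n, f, hf, rfl⟩
    rw [← cw_tlist]
    have hx := peel_of_tableauOn hξ hf
    -- All cells of the ideal occur among the first `N` entries of the tableau.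
    have hN : ∃ N, 1 ≤ N ∧ lset (tlist f n) ⊆ lset (tlist e N) := by
      have hs := peel_subset hx
      clear hx
      generalize tlist f n = xs at hs
      induction xs with
      | nil => exact ⟨1, le_rfl, by intro w hw; simp [lset] at hw⟩
      | cons x xs ih =>
        obtain ⟨N, h1, h2⟩ := ih fun y hy => hs y (List.mem_cons_of_mem _ hy)
        have hxθ := hs x List.mem_cons_self
        rw [← he.2.1] at hxθ
        obtain ⟨k, hk, rfl⟩ := hxθ
        refine ⟨max N k, le_max_of_le_left h1, fun w hw => ?_⟩
        rcases List.mem_cons.mp hw with rfl | hw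
        · exact mem_tlist.mpr ⟨k, hk, le_max_right _ _, rfl⟩
        · obtain ⟨j, h3, h4, h5⟩ := mem_tlist.mp (h2 hw)
          exact mem_tlist.mpr ⟨j, h3, le_max_of_le_left h4, h5⟩
    obtain ⟨N, hN1, hsub⟩ := hN
    obtain ⟨rs, hr, hc⟩ := peel_extend hκ hx (peel_of_tableau he N) hsub
    refine Set.mem_iUnion₂.mpr ⟨N, hN1, wble_peel hκ hθ [] _ hx, ?_⟩
    rw [← cw_tlist, hc]
    exact wble_peel hκ hθ _ rs hr

end CylPaper
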